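/- arXiv:1609.08568 — 2 statements merged into one kernel-verified Lean document; each statement's English description precedes it below -/
import Mathlib

section
/- Fix H ∈ (0, 1/2) and let 2 < d₁ < d₂. The function t ↦ b_{d₂}(t) − b_{d₁}(t) is strictly decreasing for t > 0 and strictly increasing for t < 0; in particular sup over t ∈ ℝ of (b_{d₂}(t) − b_{d₁}(t)) = b_{d₂}(0) − b_{d₁}(0) = η_{d₂} − η_{d₁}. -/
open MeasureTheory

/-- Inverse hyperbolic cosine: the inverse of `cosh` restricted to `[1, ∞)`. -/
noncomputable def arcosh (x : ℝ) : ℝ := Real.log (x + Real.sqrt (x ^ 2 - 1))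

/-- The neck parameter `η_d` of the `H`-catenoid `𝒞^H_d`. -/
noncomputable def eta (H d : ℝ) : ℝ :=
  arcosh ((2 * d * H + Real.sqrt (1 - 4 * H ^ 2 + d ^ 2)) / (1 - 4 * H ^ 2))

/-- The height function `λ_d(ρ)` of the generating curve of the `H`-catenoid. -/
noncomputable def lam (H d ρ : ℝ) : ℝ :=
  ∫ r in eta H d..ρ,
    (d + 2 * H * Real.cosh r) /
      Real.sqrt (Real.sinh r ^ 2 - (d + 2 * H * Real.cosh r) ^ 2)

/-!
Parametrize the radius on every catenoid by `s`, where `sinh ρ / (d + 2H cosh ρ) = tanh s / (2H)`.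
All necks lie at `s = artanh (2H)`, and `dρ/dλ = √((tanh s / 2H)² - 1)` is an increasing function
of `s` that does not involve `d`. On the other hand `ρ = s + arsinh ((d / 2H) sinh s)`, so `dρ/ds`
increases with `d`, and hence so does `dλ/ds`. Thus the catenoid with the larger `d` reaches a given
height `t` at a smaller parameter `s`, which means that `b_{d₂}'(t) < b_{d₁}'(t)`.
-/

section PrimitiveInverse

open Set

/-- `g` inverts on `[0, ∞)` the primitive `x ↦ ∫ r in a..x, f r` of a function `f` which is
continuous and positive on `(a, ∞)` and may blow up at `a`. Integrability of `f` near `a` is not a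
field because it follows from the others, see `IsPrimitiveInverse.intervalIntegrable`. -/
structure IsPrimitiveInverse (f : ℝ → ℝ) (a : ℝ) (g : ℝ → ℝ) : Prop where
  continuousOn : ContinuousOn f (Ioi a)
  pos : ∀ x, a < x → 0 < f x
  le : ∀ t, 0 ≤ t → a ≤ g t
  integral_eq : ∀ t, 0 ≤ t → ∫ r in a..g t, f r = t

namespace IsPrimitiveInverse

variable {f g : ℝ → ℝ} {a t x : ℝ}

lemma continuousAt (hg : IsPrimitiveInverse f a g) (hx : a < x) : ContinuousAt f x :=
  hg.continuousOn.continuousAt (Ioi_mem_nhds hx)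

lemma intervalIntegrable (hg : IsPrimitiveInverse f a g) (hx : a ≤ x) :
    IntervalIntegrable f volume a x := by
  rcases hx.eq_or_lt with rfl | hx
  · exact IntervalIntegrable.refl
  have h_integral : ∫ r in a..g 1, f r = 1 := hg.integral_eq 1 zero_le_one
  -- The integral of a non-integrable function is `0` by convention, hence not `1`.
  have h_integrable : IntervalIntegrable f volume a (g 1) :=
    not_imp_comm.1 intervalIntegral.integral_undef (by rw [h_integral]; exact one_ne_zero)
  have hg1 : a < g 1 := by
    refine (hg.le 1 zero_le_one).lt_of_ne fun h => ?_
    rw [← h, intervalIntegral.integral_same] at h_integral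
    exact zero_ne_one h_integral
  exact h_integrable.trans
    (hg.continuousOn.mono fun y hy => (lt_min hg1 hx).trans_le hy.1).intervalIntegrable

lemma hasDerivAt_integral (hg : IsPrimitiveInverse f a g) (hx : a < x) :
    HasDerivAt (fun y => ∫ r in a..y, f r) (f x) x :=
  intervalIntegral.integral_hasDerivAt_right (hg.intervalIntegrable hx.le)
    (hg.continuousOn.stronglyMeasurableAtFilter isOpen_Ioi x hx) (hg.continuousAt hx)

lemma continuousOn_integral (hg : IsPrimitiveInverse f a g) :
    ContinuousOn (fun y => ∫ r in a..y, f r) (Ici a) := by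
  intro x hx
  have hx1 : a ≤ x + 1 := (mem_Ici.1 hx).trans (by linarith)
  have h_cont := intervalIntegral.continuousOn_primitive_interval'
    (hg.intervalIntegrable hx1) left_mem_uIcc
  rw [uIcc_of_le hx1] at h_cont
  exact (h_cont x ⟨hx, by linarith⟩).mono_of_mem_nhdsWithin
    (inter_mem_nhdsWithin _ (Iic_mem_nhds (lt_add_one x)))

lemma strictMonoOn_integral (hg : IsPrimitiveInverse f a g) :
    StrictMonoOn (fun y => ∫ r in a..y, f r) (Ici a) := by
  refine strictMonoOn_of_deriv_pos (convex_Ici a) hg.continuousOn_integral fun x hx => ?_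
  rw [interior_Ici] at hx
  rw [(hg.hasDerivAt_integral hx).deriv]
  exact hg.pos x hx

lemma integral_nonneg (hg : IsPrimitiveInverse f a g) (hx : a ≤ x) : 0 ≤ ∫ r in a..x, f r := by
  simpa only [intervalIntegral.integral_same] using
    hg.strictMonoOn_integral.monotoneOn self_mem_Ici hx hx

lemma apply_integral (hg : IsPrimitiveInverse f a g) (hx : a ≤ x) :
    g (∫ r in a..x, f r) = x :=
  have h_nonneg := hg.integral_nonneg hx
  hg.strictMonoOn_integral.injOn (hg.le _ h_nonneg) hx (hg.integral_eq _ h_nonneg)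

lemma apply_zero (hg : IsPrimitiveInverse f a g) : g 0 = a := by
  simpa only [intervalIntegral.integral_same] using hg.apply_integral le_rfl

lemma strictMonoOn (hg : IsPrimitiveInverse f a g) : StrictMonoOn g (Ici 0) := by
  intro s hs t ht hst
  rw [← hg.strictMonoOn_integral.lt_iff_lt (hg.le s hs) (hg.le t ht)]
  simpa only [hg.integral_eq s hs, hg.integral_eq t ht] using hst

lemma surjOn (hg : IsPrimitiveInverse f a g) : SurjOn g (Ici 0) (Ici a) :=
  fun _ hx => ⟨_, hg.integral_nonneg hx, hg.apply_integral hx⟩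

lemma lt_apply (hg : IsPrimitiveInverse f a g) (ht : 0 < t) : a < g t := by
  simpa only [hg.apply_zero] using hg.strictMonoOn self_mem_Ici ht.le ht

lemma continuousAt_inverse (hg : IsPrimitiveInverse f a g) (ht : 0 < t) : ContinuousAt g t :=
  hg.strictMonoOn.continuousAt_of_image_mem_nhds (Ici_mem_nhds ht)
    (Filter.mem_of_superset (Ici_mem_nhds (hg.lt_apply ht)) hg.surjOn)

lemma continuousOn_inverse (hg : IsPrimitiveInverse f a g) : ContinuousOn g (Ici 0) := by
  intro t ht
  rcases (mem_Ici.1 ht).eq_or_lt with rfl | ht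
  · refine hg.strictMonoOn.continuousWithinAt_right_of_surjOn self_mem_nhdsWithin ?_
    rw [hg.apply_zero]
    exact hg.surjOn.mono subset_rfl Ioi_subset_Ici_self
  · exact (hg.continuousAt_inverse ht).continuousWithinAt

lemma hasDerivAt_inverse (hg : IsPrimitiveInverse f a g) (ht : 0 < t) :
    HasDerivAt g (f (g t))⁻¹ t := by
  have hgt : a < g t := hg.lt_apply ht
  refine HasDerivAt.of_local_left_inverse (hg.continuousAt_inverse ht)
    (hg.hasDerivAt_integral hgt) (hg.pos _ hgt).ne' ?_
  filter_upwards [Ioi_mem_nhds ht] with s hs using hg.integral_eq s (le_of_lt hs)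

end IsPrimitiveInverse

end PrimitiveInverse

section Parametrization

open Set
open Real (sinh cosh tanh arsinh artanh)

lemma strictMono_tanh : StrictMono tanh := fun x y hxy => by
  rwa [← Real.artanh_lt_artanh_iff (Real.tanh_bijOn.mapsTo trivial)
    (Real.tanh_bijOn.mapsTo trivial), Real.artanh_tanh, Real.artanh_tanh]

lemma tanh_pos {x : ℝ} (hx : 0 < x) : 0 < tanh x := by
  simpa only [Real.tanh_zero] using strictMono_tanh hx

/-- The slope `dλ/dρ` of the generating curve of the `H`-catenoid `𝒞^H_d`. -/
noncomputable def lamIntegrand (H d r : ℝ) : ℝ :=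
  (d + 2 * H * cosh r) / √(sinh r ^ 2 - (d + 2 * H * cosh r) ^ 2)

/-- The radius `ρ` of the point of `𝒞^H_d` with parameter `s`, where
`sinh ρ / (d + 2H cosh ρ) = tanh s / (2H)`. Multiplying out, this reads
`sinh (ρ - s) = (d / 2H) sinh s`, which is solved for `ρ` here. -/
noncomputable def catenoidRadius (H d s : ℝ) : ℝ := arsinh (d / (2 * H) * sinh s) + s

/-- The derivative `dρ/dλ` at the point of parameter `s`, which is the same on all the catenoids
`𝒞^H_d`. -/
noncomputable def radialSpeed (H s : ℝ) : ℝ := √((tanh s / (2 * H)) ^ 2 - 1)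

variable {H d d₁ d₂ r s : ℝ} {g : ℝ → ℝ}

lemma continuous_catenoidRadius (H d : ℝ) : Continuous (catenoidRadius H d) := by
  unfold catenoidRadius
  exact (Continuous.arsinh (by fun_prop)).add continuous_id

lemma strictMono_catenoidRadius (hH : 0 ≤ H) (hd : 0 ≤ d) : StrictMono (catenoidRadius H d) := by
  have h_mono : Monotone fun s => arsinh (d / (2 * H) * sinh s) := fun s t hst =>
    Real.arsinh_le_arsinh.2
      (mul_le_mul_of_nonneg_left (Real.sinh_le_sinh.2 hst) (by positivity))
  exact h_mono.add_strictMono strictMono_id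

lemma le_catenoidRadius (hH : 0 ≤ H) (hd : 0 ≤ d) (hs : 0 ≤ s) : s ≤ catenoidRadius H d s :=
  le_add_of_nonneg_left <| Real.arsinh_nonneg_iff.2 <|
    mul_nonneg (by positivity) (Real.sinh_nonneg_iff.2 hs)

lemma surjOn_catenoidRadius (hH : 0 ≤ H) (hd : 0 ≤ d) (hs : 0 ≤ s) :
    SurjOn (catenoidRadius H d) (Ioi s) (Ioi (catenoidRadius H d s)) := by
  intro r hr
  have hsr : s ≤ r := (le_catenoidRadius hH hd hs).trans (le_of_lt hr)
  obtain ⟨u, -, rfl⟩ := intermediate_value_Icc hsr (continuous_catenoidRadius H d).continuousOn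
    ⟨le_of_lt hr, le_catenoidRadius hH hd (hs.trans hsr)⟩
  exact ⟨u, (strictMono_catenoidRadius hH hd).lt_iff_lt.1 hr, rfl⟩

lemma hasDerivAt_catenoidRadius (H d : ℝ) (hs : s ≠ 0) :
    HasDerivAt (catenoidRadius H d) (tanh (arsinh (d / (2 * H) * sinh s)) / tanh s + 1) s := by
  have h_deriv := (((Real.hasDerivAt_sinh s).const_mul (d / (2 * H))).arsinh).add (hasDerivAt_id s)
  refine h_deriv.congr_deriv ?_
  have h_sinh : sinh s ≠ 0 := Real.sinh_eq_zero.not.2 hs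
  have := (Real.cosh_pos s).ne'
  rw [Real.tanh_arsinh, Real.tanh_eq_sinh_div_cosh, smul_eq_mul]
  field_simp

lemma deriv_catenoidRadius_lt (hH : 0 < H) (hd : d₁ < d₂) (hs : 0 < s) :
    deriv (catenoidRadius H d₁) s < deriv (catenoidRadius H d₂) s := by
  rw [(hasDerivAt_catenoidRadius H d₁ hs.ne').deriv, (hasDerivAt_catenoidRadius H d₂ hs.ne').deriv]
  have h_arg : d₁ / (2 * H) * sinh s < d₂ / (2 * H) * sinh s :=
    mul_lt_mul_of_pos_right (by gcongr) (Real.sinh_pos_iff.2 hs)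
  have h_tanh := strictMono_tanh (Real.arsinh_lt_arsinh.2 h_arg)
  have := tanh_pos hs
  gcongr

lemma sinh_catenoidRadius (hH : H ≠ 0) (d s : ℝ) :
    sinh (catenoidRadius H d s) =
      tanh s / (2 * H) * (d + 2 * H * cosh (catenoidRadius H d s)) := by
  have h : sinh (catenoidRadius H d s - s) = d / (2 * H) * sinh s := by
    rw [catenoidRadius, add_sub_cancel_right, Real.sinh_arsinh]
  rw [Real.sinh_sub] at h
  have := Real.cosh_pos s
  rw [Real.tanh_eq_sinh_div_cosh]
  field_simp at h ⊢
  linarith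

lemma sinh_sq_sub_sq_catenoidRadius (hH : H ≠ 0) (d s : ℝ) :
    sinh (catenoidRadius H d s) ^ 2 - (d + 2 * H * cosh (catenoidRadius H d s)) ^ 2 =
      (d + 2 * H * cosh (catenoidRadius H d s)) ^ 2 * ((tanh s / (2 * H)) ^ 2 - 1) := by
  rw [sinh_catenoidRadius hH]
  ring

lemma add_two_mul_cosh_pos (hH : 0 ≤ H) (hd : -(2 * H) < d) (r : ℝ) : 0 < d + 2 * H * cosh r := by
  nlinarith [Real.one_le_cosh r]

lemma lamIntegrand_catenoidRadius (hH : 0 < H) (hd : -(2 * H) < d) (s : ℝ) :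
    lamIntegrand H d (catenoidRadius H d s) = (radialSpeed H s)⁻¹ := by
  have hw := add_two_mul_cosh_pos hH.le hd (catenoidRadius H d s)
  rw [lamIntegrand, sinh_sq_sub_sq_catenoidRadius hH.ne', Real.sqrt_mul (sq_nonneg _),
    Real.sqrt_sq hw.le, div_mul_cancel_left₀ hw.ne', radialSpeed]

lemma artanh_two_mul_pos (hH0 : 0 < H) (hH : H < 1 / 2) : 0 < artanh (2 * H) :=
  Real.artanh_pos ⟨by linarith, by linarith⟩

lemma one_lt_tanh_div (hH0 : 0 < H) (hH : H < 1 / 2) (hs : artanh (2 * H) < s) :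
    1 < tanh s / (2 * H) := by
  have h_tanh := strictMono_tanh hs
  rw [Real.tanh_artanh ⟨by linarith, by linarith⟩] at h_tanh
  rwa [one_lt_div (by linarith)]

lemma radialSpeed_pos (hH0 : 0 < H) (hH : H < 1 / 2) (hs : artanh (2 * H) < s) :
    0 < radialSpeed H s :=
  Real.sqrt_pos.2 (sub_pos.2 (one_lt_pow₀ (one_lt_tanh_div hH0 hH hs) two_ne_zero))

lemma strictMonoOn_radialSpeed (hH0 : 0 < H) (hH : H < 1 / 2) :
    StrictMonoOn (radialSpeed H) (Ioi (artanh (2 * H))) := by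
  intro s hs t _ hst
  have h_one := one_lt_tanh_div hH0 hH hs
  have h_lt : tanh s / (2 * H) < tanh t / (2 * H) :=
    div_lt_div_of_pos_right (strictMono_tanh hst) (by linarith)
  unfold radialSpeed
  apply Real.sqrt_lt_sqrt
  · exact sub_nonneg.2 (one_le_pow₀ h_one.le)
  · gcongr

lemma cosh_catenoidRadius_artanh (hH0 : 0 < H) (hH : H < 1 / 2) (d : ℝ) :
    cosh (catenoidRadius H d (artanh (2 * H))) =
      (2 * d * H + √(1 - 4 * H ^ 2 + d ^ 2)) / (1 - 4 * H ^ 2) := by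
  have h_mem : 2 * H ∈ Ioo (-1) 1 := ⟨by linarith, by linarith⟩
  have hq : 0 < 1 - 4 * H ^ 2 := by nlinarith
  have h_sqrt : √(1 + (d / √(1 - 4 * H ^ 2)) ^ 2) =
      √(1 - 4 * H ^ 2 + d ^ 2) / √(1 - 4 * H ^ 2) := by
    rw [← Real.sqrt_div' _ hq.le, div_pow, Real.sq_sqrt hq.le, add_div, div_self hq.ne']
  have h_arg : d / (2 * H) * (2 * H / √(1 - 4 * H ^ 2)) = d / √(1 - 4 * H ^ 2) := by
    field_simp
  rw [catenoidRadius, Real.cosh_add, Real.cosh_arsinh, Real.sinh_arsinh, Real.cosh_artanh h_mem,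
    Real.sinh_artanh h_mem, show (2 * H) ^ 2 = 4 * H ^ 2 by ring, h_arg, h_sqrt,
    div_mul_div_comm, div_mul_div_comm, Real.mul_self_sqrt hq.le]
  ring

lemma eta_eq_catenoidRadius (hH0 : 0 < H) (hH : H < 1 / 2) (hd : 0 ≤ d) :
    eta H d = catenoidRadius H d (artanh (2 * H)) := by
  have hs := (artanh_two_mul_pos hH0 hH).le
  rw [eta, ← cosh_catenoidRadius_artanh hH0 hH]
  exact Real.arcosh_cosh (hs.trans (le_catenoidRadius hH0.le hd hs))

lemma eta_lt_catenoidRadius (hH0 : 0 < H) (hH : H < 1 / 2) (hd : 0 ≤ d)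
    (hs : artanh (2 * H) < s) : eta H d < catenoidRadius H d s := by
  rw [eta_eq_catenoidRadius hH0 hH hd]
  exact strictMono_catenoidRadius hH0.le hd hs

lemma exists_catenoidRadius_eq (hH0 : 0 < H) (hH : H < 1 / 2) (hd : 0 ≤ d) (hr : eta H d < r) :
    ∃ s, artanh (2 * H) < s ∧ catenoidRadius H d s = r := by
  rw [eta_eq_catenoidRadius hH0 hH hd] at hr
  exact surjOn_catenoidRadius hH0.le hd (artanh_two_mul_pos hH0 hH).le hr

lemma lamIntegrand_pos (hH0 : 0 < H) (hH : H < 1 / 2) (hd : 0 ≤ d) (hr : eta H d < r) :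
    0 < lamIntegrand H d r := by
  obtain ⟨s, hs, rfl⟩ := exists_catenoidRadius_eq hH0 hH hd hr
  rw [lamIntegrand_catenoidRadius hH0 (by linarith)]
  exact inv_pos.2 (radialSpeed_pos hH0 hH hs)

lemma continuousOn_lamIntegrand (hH0 : 0 < H) (hH : H < 1 / 2) (hd : 0 ≤ d) :
    ContinuousOn (lamIntegrand H d) (Ioi (eta H d)) := by
  have h_ne : ∀ r ∈ Ioi (eta H d), √(sinh r ^ 2 - (d + 2 * H * cosh r) ^ 2) ≠ 0 := by
    intro r hr h_zero
    -- Dividing by zero gives `0`, so the positivity of the quotient excludes a zero denominator.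
    have h_pos := lamIntegrand_pos hH0 hH hd hr
    rw [lamIntegrand, h_zero, div_zero] at h_pos
    exact h_pos.false
  unfold lamIntegrand
  fun_prop (disch := assumption)

lemma isPrimitiveInverse_of_lam (hH0 : 0 < H) (hH : H < 1 / 2) (hd : 0 ≤ d)
    (hg : ∀ t : ℝ, 0 ≤ t → eta H d ≤ g t ∧ lam H d (g t) = t) :
    IsPrimitiveInverse (lamIntegrand H d) (eta H d) g where
  continuousOn := continuousOn_lamIntegrand hH0 hH hd
  pos _ := lamIntegrand_pos hH0 hH hd
  le t ht := (hg t ht).1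
  integral_eq t ht := (hg t ht).2

end Parametrization

section Comparison

open Set
open Real (artanh)

variable {H d d₁ d₂ s t : ℝ} {g g₁ g₂ : ℝ → ℝ}

lemma hasDerivAt_lam_catenoidRadius (hH0 : 0 < H) (hH : H < 1 / 2) (hd : 0 ≤ d)
    (hg : IsPrimitiveInverse (lamIntegrand H d) (eta H d) g) (hs : artanh (2 * H) < s) :
    HasDerivAt (fun u => lam H d (catenoidRadius H d u))
      ((radialSpeed H s)⁻¹ * deriv (catenoidRadius H d) s) s := by
  have hs0 : s ≠ 0 := ((artanh_two_mul_pos hH0 hH).trans hs).ne'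
  rw [← lamIntegrand_catenoidRadius hH0 (show -(2 * H) < d by linarith)]
  exact (hg.hasDerivAt_integral (eta_lt_catenoidRadius hH0 hH hd hs)).comp s
    (hasDerivAt_catenoidRadius H d hs0).differentiableAt.hasDerivAt

lemma continuousOn_lam_catenoidRadius (hH0 : 0 < H) (hH : H < 1 / 2) (hd : 0 ≤ d)
    (hg : IsPrimitiveInverse (lamIntegrand H d) (eta H d) g) :
    ContinuousOn (fun u => lam H d (catenoidRadius H d u)) (Ici (artanh (2 * H))) := by
  refine hg.continuousOn_integral.comp (continuous_catenoidRadius H d).continuousOn fun s hs => ?_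
  rw [mem_Ici, eta_eq_catenoidRadius hH0 hH hd]
  exact (strictMono_catenoidRadius hH0.le hd).monotone hs

lemma lam_catenoidRadius_lt (hH0 : 0 < H) (hH : H < 1 / 2) (hd₁ : 0 ≤ d₁) (hd : d₁ < d₂)
    (hg₁ : IsPrimitiveInverse (lamIntegrand H d₁) (eta H d₁) g₁)
    (hg₂ : IsPrimitiveInverse (lamIntegrand H d₂) (eta H d₂) g₂) (hs : artanh (2 * H) < s) :
    lam H d₁ (catenoidRadius H d₁ s) < lam H d₂ (catenoidRadius H d₂ s) := by
  have hd₂ : 0 ≤ d₂ := hd₁.trans hd.le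
  have h_mono : StrictMonoOn
      (fun u => lam H d₂ (catenoidRadius H d₂ u) - lam H d₁ (catenoidRadius H d₁ u))
      (Ici (artanh (2 * H))) := by
    refine strictMonoOn_of_deriv_pos (convex_Ici _)
      ((continuousOn_lam_catenoidRadius hH0 hH hd₂ hg₂).sub
        (continuousOn_lam_catenoidRadius hH0 hH hd₁ hg₁)) fun u hu => ?_
    rw [interior_Ici] at hu
    rw [((hasDerivAt_lam_catenoidRadius hH0 hH hd₂ hg₂ hu).fun_sub
      (hasDerivAt_lam_catenoidRadius hH0 hH hd₁ hg₁ hu)).deriv, ← mul_sub]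
    exact mul_pos (inv_pos.2 (radialSpeed_pos hH0 hH hu))
      (sub_pos.2 (deriv_catenoidRadius_lt hH0 hd ((artanh_two_mul_pos hH0 hH).trans hu)))
  have h_lt := h_mono self_mem_Ici hs.le hs
  simpa only [← eta_eq_catenoidRadius hH0 hH hd₁, ← eta_eq_catenoidRadius hH0 hH hd₂, lam,
    intervalIntegral.integral_same, sub_zero, sub_pos] using h_lt

lemma exists_hasDerivAt_radialSpeed (hH0 : 0 < H) (hH : H < 1 / 2) (hd : 0 ≤ d)
    (hg : IsPrimitiveInverse (lamIntegrand H d) (eta H d) g) (ht : 0 < t) :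
    ∃ s, artanh (2 * H) < s ∧ lam H d (catenoidRadius H d s) = t ∧
      HasDerivAt g (radialSpeed H s) t := by
  obtain ⟨s, hs, h_eq⟩ := exists_catenoidRadius_eq hH0 hH hd (hg.lt_apply ht)
  refine ⟨s, hs, h_eq ▸ hg.integral_eq t ht.le, ?_⟩
  rw [← inv_inv (radialSpeed H s),
    ← lamIntegrand_catenoidRadius hH0 (show -(2 * H) < d by linarith), h_eq]
  exact hg.hasDerivAt_inverse ht

lemma strictAntiOn_sub (hH0 : 0 < H) (hH : H < 1 / 2) (hd₁ : 0 ≤ d₁) (hd : d₁ < d₂)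
    (hg₁ : IsPrimitiveInverse (lamIntegrand H d₁) (eta H d₁) g₁)
    (hg₂ : IsPrimitiveInverse (lamIntegrand H d₂) (eta H d₂) g₂) :
    StrictAntiOn (fun t => g₂ t - g₁ t) (Ici 0) := by
  have hd₂ : 0 ≤ d₂ := hd₁.trans hd.le
  refine strictAntiOn_of_deriv_neg (convex_Ici _)
    (hg₂.continuousOn_inverse.sub hg₁.continuousOn_inverse) fun t ht => ?_
  rw [interior_Ici] at ht
  obtain ⟨s₁, hs₁, h_lam₁, h_deriv₁⟩ := exists_hasDerivAt_radialSpeed hH0 hH hd₁ hg₁ ht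
  obtain ⟨s₂, hs₂, h_lam₂, h_deriv₂⟩ := exists_hasDerivAt_radialSpeed hH0 hH hd₂ hg₂ ht
  have h_lt : lam H d₂ (catenoidRadius H d₂ s₂) < lam H d₂ (catenoidRadius H d₂ s₁) := by
    rw [h_lam₂, ← h_lam₁]
    exact lam_catenoidRadius_lt hH0 hH hd₁ hd hg₁ hg₂ hs₁
  have h_radius : catenoidRadius H d₂ s₂ < catenoidRadius H d₂ s₁ :=
    (hg₂.strictMonoOn_integral.lt_iff_lt (eta_lt_catenoidRadius hH0 hH hd₂ hs₂).le
      (eta_lt_catenoidRadius hH0 hH hd₂ hs₁).le).1 h_lt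
  have h_param : s₂ < s₁ := (strictMono_catenoidRadius hH0.le hd₂).lt_iff_lt.1 h_radius
  rw [(h_deriv₂.fun_sub h_deriv₁).deriv]
  exact sub_neg.2 (strictMonoOn_radialSpeed hH0 hH hs₂ hs₁ h_param)

end Comparison

theorem stmt_17_general (H d₁ d₂ : ℝ) (hH0 : 0 < H) (hH : H < 1 / 2)
    (hd₁ : 0 ≤ d₁) (hd : d₁ < d₂) (g₁ g₂ : ℝ → ℝ)
    (hg₁ : ∀ t : ℝ, 0 ≤ t → eta H d₁ ≤ g₁ t ∧ lam H d₁ (g₁ t) = t)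
    (hg₂ : ∀ t : ℝ, 0 ≤ t → eta H d₂ ≤ g₂ t ∧ lam H d₂ (g₂ t) = t) :
    StrictAntiOn (fun t : ℝ => g₂ |t| - g₁ |t|) (Set.Ioi 0) ∧
    StrictMonoOn (fun t : ℝ => g₂ |t| - g₁ |t|) (Set.Iio 0) ∧
    (∀ t : ℝ, g₂ |t| - g₁ |t| ≤ g₂ 0 - g₁ 0) ∧
    g₂ 0 - g₁ 0 = eta H d₂ - eta H d₁ := by
  have h_inv₁ := isPrimitiveInverse_of_lam hH0 hH hd₁ hg₁
  have h_inv₂ := isPrimitiveInverse_of_lam hH0 hH (hd₁.trans hd.le) hg₂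
  have h_anti := strictAntiOn_sub hH0 hH hd₁ hd h_inv₁ h_inv₂
  refine ⟨fun s hs t ht hst => ?_, fun s hs t ht hst => ?_, fun t => ?_, ?_⟩
  · exact h_anti (abs_nonneg s) (abs_nonneg t) (by rwa [abs_of_pos hs, abs_of_pos ht])
  · exact h_anti (abs_nonneg t) (abs_nonneg s)
      (by rwa [abs_of_neg ht, abs_of_neg hs, neg_lt_neg_iff])
  · exact h_anti.antitoneOn Set.self_mem_Ici (abs_nonneg t) (abs_nonneg t)
  · rw [h_inv₁.apply_zero, h_inv₂.apply_zero]

/-- `g₁, g₂` encode the inverses `λ_{d₁}^{-1}, λ_{d₂}^{-1} : [0, ∞) → [η_d, ∞)`, and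
`b_{d_i}(t) = λ_{d_i}^{-1}(|t|) = gᵢ |t|`. -/
theorem stmt_17 (H d₁ d₂ : ℝ) (hH0 : 0 < H) (hH : H < 1 / 2)
    (hd₁ : 2 < d₁) (hd : d₁ < d₂) (g₁ g₂ : ℝ → ℝ)
    (hg₁ : ∀ t : ℝ, 0 ≤ t → eta H d₁ ≤ g₁ t ∧ lam H d₁ (g₁ t) = t)
    (hg₂ : ∀ t : ℝ, 0 ≤ t → eta H d₂ ≤ g₂ t ∧ lam H d₂ (g₂ t) = t) :
    StrictAntiOn (fun t : ℝ => g₂ |t| - g₁ |t|) (Set.Ioi 0) ∧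
    StrictMonoOn (fun t : ℝ => g₂ |t| - g₁ |t|) (Set.Iio 0) ∧
    (∀ t : ℝ, g₂ |t| - g₁ |t| ≤ g₂ 0 - g₁ 0) ∧
    g₂ 0 - g₁ 0 = eta H d₂ - eta H d₁ :=
  stmt_17_general H d₁ d₂ hH0 hH (by linarith) hd g₁ g₂ hg₁ hg₂
end

section
/- Fix H ∈ (0, 1/2) and let 2 < d₁ < d₂. There exists at most one t₀ > 0 such that λ_{d₂}^{-1}(t₀) − λ_{d₁}^{-1}(t₀) = 0; that is, the function t ↦ λ_{d₂}^{-1}(t) − λ_{d₁}^{-1}(t) has at most one zero on (0, ∞). -/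
open MeasureTheory

/-!
For fixed `r` the integrand of `λ_d(ρ)` is `x / √(sinh² r - x²)` at `x = d + 2H cosh r`, which is
strictly increasing in `x` and hence in `d`.  So `λ_{d₂} - λ_{d₁}` is strictly increasing beyond
both necks and has at most one zero there; a zero of `λ_{d₂}⁻¹ - λ_{d₁}⁻¹` at height `t` is a zero
of `λ_{d₂} - λ_{d₁}` at the common radius.
-/

open Set Real

lemma strictMonoOn_div_sqrt_sub_sq (A : ℝ) :
    StrictMonoOn (fun x : ℝ => x / √(A - x ^ 2)) {x | x ^ 2 < A} := by
  intro x hx y hy hxy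
  have hx_pos : 0 < √(A - x ^ 2) := sqrt_pos.2 (sub_pos.2 hx)
  have hy_pos : 0 < √(A - y ^ 2) := sqrt_pos.2 (sub_pos.2 hy)
  change x / √(A - x ^ 2) < y / √(A - y ^ 2)
  rw [div_lt_div_iff₀ hx_pos hy_pos]
  rcases le_total 0 x with hx0 | hx0
  · have : √(A - y ^ 2) ≤ √(A - x ^ 2) := by gcongr
    exact mul_lt_mul hxy this hy_pos (hx0.trans hxy.le)
  rcases le_total 0 y with hy0 | hy0
  · rcases hx0.lt_or_eq with hx0 | rfl
    · exact (mul_neg_of_neg_of_pos hx0 hy_pos).trans_le (mul_nonneg hy0 hx_pos.le)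
    · simpa only [zero_mul] using mul_pos hxy hx_pos
  · have : √(A - x ^ 2) ≤ √(A - y ^ 2) :=
      sqrt_le_sqrt (sub_le_sub_left (by nlinarith) A)
    exact (mul_lt_mul_of_pos_right hxy hy_pos).trans_le (mul_le_mul_of_nonpos_left this hy0)

lemma intervalIntegrable_deriv_div_sqrt_sub {f f' : ℝ → ℝ} {a b : ℝ} (hab : a ≤ b)
    (hcont : ContinuousOn f (Icc a b)) (hderiv : ∀ x ∈ Ioo a b, HasDerivAt f (f' x) x)
    (hf' : ∀ x ∈ Ioo a b, 0 ≤ f' x) (hf : ∀ x ∈ Ioo a b, f a < f x) :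
    IntervalIntegrable (fun x => f' x / √(f x - f a)) volume a b := by
  have hcont_sqrt : ContinuousOn (fun x => 2 * √(f x - f a)) (uIcc a b) := by
    rw [uIcc_of_le hab]
    fun_prop
  refine intervalIntegral.intervalIntegrable_deriv_of_nonneg hcont_sqrt ?_ ?_ <;>
    rw [min_eq_left hab, max_eq_right hab] <;> intro x hx
  · simpa only [← mul_div_assoc, mul_div_mul_left _ _ (two_ne_zero' ℝ)] using
      (((hderiv x hx).sub_const (f a)).sqrt (sub_pos.2 (hf x hx)).ne').const_mul 2
  · exact div_nonneg (hf' x hx) (sqrt_nonneg _)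

/-- The hyperbolic cosine of the neck parameter `η_d`, i.e. the larger root `c` of
`c² - 1 = (d + 2Hc)²` when `|H| < 1/2`. -/
noncomputable def neckCosh (H d : ℝ) : ℝ :=
  (2 * d * H + √(1 - 4 * H ^ 2 + d ^ 2)) / (1 - 4 * H ^ 2)

/-- The slope `dλ_d/dρ` of the generating curve, i.e. the integrand of `lam`. -/
noncomputable def lamSlope (H d r : ℝ) : ℝ :=
  (d + 2 * H * cosh r) / √(sinh r ^ 2 - (d + 2 * H * cosh r) ^ 2)

section Neck

variable {H d r : ℝ}

lemma one_sub_four_mul_sq_pos (hH : |H| < 1 / 2) : 0 < 1 - 4 * H ^ 2 := by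
  have : H ^ 2 < (1 / 2) ^ 2 := sq_lt_sq' (abs_lt.1 hH).1 (abs_lt.1 hH).2
  linarith

lemma one_le_neckCosh (hH : |H| < 1 / 2) (d : ℝ) : 1 ≤ neckCosh H d := by
  have hk := one_sub_four_mul_sq_pos hH
  rw [neckCosh, one_le_div hk, ← sub_le_iff_le_add']
  have : (1 - 4 * H ^ 2 - 2 * d * H) ^ 2 ≤ 1 - 4 * H ^ 2 + d ^ 2 := by
    -- The two sides differ by `(1 - 4H²)(d + 2H)²`.
    nlinarith [mul_nonneg hk.le (sq_nonneg (d + 2 * H))]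
  exact le_sqrt_of_sq_le this

lemma eta_nonneg (hH : |H| < 1 / 2) (d : ℝ) : 0 ≤ eta H d :=
  Real.arcosh_nonneg (one_le_neckCosh hH d)

lemma cosh_eta (hH : |H| < 1 / 2) (d : ℝ) : cosh (eta H d) = neckCosh H d :=
  Real.cosh_arcosh (one_le_neckCosh hH d)

lemma cosh_eta_lt_cosh (hH : |H| < 1 / 2) (hr : eta H d < r) : cosh (eta H d) < cosh r :=
  cosh_strictMonoOn (eta_nonneg hH d) ((eta_nonneg hH d).trans hr.le) hr

lemma sinh_sq_sub_sq_eq (hH : |H| < 1 / 2) (d r : ℝ) :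
    sinh r ^ 2 - (d + 2 * H * cosh r) ^ 2 =
      (cosh r - cosh (eta H d)) *
        ((1 - 4 * H ^ 2) * (cosh r - cosh (eta H d)) + 2 * √(1 - 4 * H ^ 2 + d ^ 2)) := by
  have hk := one_sub_four_mul_sq_pos hH
  have hsq : √(1 - 4 * H ^ 2 + d ^ 2) ^ 2 = 1 - 4 * H ^ 2 + d ^ 2 := sq_sqrt (by positivity)
  have hneck : (1 - 4 * H ^ 2) * neckCosh H d = 2 * d * H + √(1 - 4 * H ^ 2 + d ^ 2) :=
    mul_div_cancel₀ _ hk.ne'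
  rw [cosh_eta hH, sinh_sq]
  apply mul_left_cancel₀ hk.ne'
  linear_combination hsq + (2 * (1 - 4 * H ^ 2) * cosh r - (1 - 4 * H ^ 2) * neckCosh H d
    - 2 * d * H + √(1 - 4 * H ^ 2 + d ^ 2)) * hneck

lemma sqrt_one_sub_four_mul_sq_add_sq_pos (hH : |H| < 1 / 2) (d : ℝ) :
    0 < √(1 - 4 * H ^ 2 + d ^ 2) :=
  sqrt_pos.2 (add_pos_of_pos_of_nonneg (one_sub_four_mul_sq_pos hH) (sq_nonneg d))

lemma mul_cosh_sub_cosh_eta_le (hH : |H| < 1 / 2) (d r : ℝ) :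
    2 * √(1 - 4 * H ^ 2 + d ^ 2) * (cosh r - cosh (eta H d)) ≤
      sinh r ^ 2 - (d + 2 * H * cosh r) ^ 2 := by
  rw [sinh_sq_sub_sq_eq hH]
  nlinarith [mul_nonneg (one_sub_four_mul_sq_pos hH).le (sq_nonneg (cosh r - cosh (eta H d)))]

lemma sq_lt_sinh_sq (hH : |H| < 1 / 2) (hr : eta H d < r) :
    (d + 2 * H * cosh r) ^ 2 < sinh r ^ 2 := by
  have hs := sqrt_one_sub_four_mul_sq_add_sq_pos hH d
  have hc := sub_pos.2 (cosh_eta_lt_cosh hH hr)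
  exact sub_pos.1 <| (mul_pos (mul_pos two_pos hs) hc).trans_le (mul_cosh_sub_cosh_eta_le hH d r)

end Neck

section Height

variable {H d d₁ d₂ r ρ : ℝ}

-- The bound is a multiple of the derivative of `√(cosh r - cosh η_d)`, hence integrable up to the
-- neck.
lemma abs_lamSlope_le (hH : |H| < 1 / 2) (hr : eta H d < r) :
    |lamSlope H d r| ≤
      (√(2 * √(1 - 4 * H ^ 2 + d ^ 2)))⁻¹ * (sinh r / √(cosh r - cosh (eta H d))) := by
  have hs := sqrt_one_sub_four_mul_sq_add_sq_pos hH d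
  have hc := sub_pos.2 (cosh_eta_lt_cosh hH hr)
  have hsinh : 0 ≤ sinh r := sinh_nonneg_iff.2 ((eta_nonneg hH d).trans hr.le)
  calc |lamSlope H d r|
      = |d + 2 * H * cosh r| / √(sinh r ^ 2 - (d + 2 * H * cosh r) ^ 2) := by
        rw [lamSlope, abs_div, abs_of_nonneg (sqrt_nonneg _)]
    _ ≤ sinh r / √(2 * √(1 - 4 * H ^ 2 + d ^ 2) * (cosh r - cosh (eta H d))) := by
        gcongr
        · exact abs_le_of_sq_le_sq (sq_lt_sinh_sq hH hr).le hsinh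
        · exact mul_cosh_sub_cosh_eta_le hH d r
    _ = _ := by
        rw [sqrt_mul (by positivity)]
        field_simp

lemma intervalIntegrable_lamSlope (hH : |H| < 1 / 2) (hρ : eta H d ≤ ρ) :
    IntervalIntegrable (lamSlope H d) volume (eta H d) ρ := by
  have hdom : IntervalIntegrable (fun r => sinh r / √(cosh r - cosh (eta H d))) volume
      (eta H d) ρ :=
    intervalIntegrable_deriv_div_sqrt_sub hρ continuous_cosh.continuousOn
      (fun r _ => hasDerivAt_cosh r)
      (fun r hr => sinh_nonneg_iff.2 ((eta_nonneg hH d).trans hr.1.le))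
      (fun r hr => cosh_eta_lt_cosh hH hr.1)
  have hmeas : Measurable (lamSlope H d) := by
    unfold lamSlope
    fun_prop
  refine (hdom.const_mul (√(2 * √(1 - 4 * H ^ 2 + d ^ 2)))⁻¹).mono_fun'
    hmeas.aestronglyMeasurable ?_
  rw [uIoc_of_le hρ]
  exact ae_restrict_of_forall_mem measurableSet_Ioc fun r hr => abs_lamSlope_le hH hr.1

lemma lamSlope_lt_lamSlope (hH : |H| < 1 / 2) (hd : d₁ < d₂)
    (h₁ : eta H d₁ < r) (h₂ : eta H d₂ < r) : lamSlope H d₁ r < lamSlope H d₂ r :=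
  strictMonoOn_div_sqrt_sub_sq (sinh r ^ 2) (sq_lt_sinh_sq hH h₁) (sq_lt_sinh_sq hH h₂)
    (add_lt_add_left hd _)

lemma strictMonoOn_lam_sub_lam (hH : |H| < 1 / 2) (hd : d₁ < d₂) :
    StrictMonoOn (fun ρ => lam H d₂ ρ - lam H d₁ ρ) (Ici (eta H d₁) ∩ Ici (eta H d₂)) := by
  rintro ρ ⟨hρ₁, hρ₂⟩ ρ' ⟨hρ₁', hρ₂'⟩ hlt
  have lam_sub {d : ℝ} (hρ : eta H d ≤ ρ) (hρ' : eta H d ≤ ρ') :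
      IntervalIntegrable (lamSlope H d) volume ρ ρ' ∧
        lam H d ρ' - lam H d ρ = ∫ r in ρ..ρ', lamSlope H d r :=
    have hint := intervalIntegrable_lamSlope hH hρ
    have hint' := intervalIntegrable_lamSlope hH hρ'
    ⟨hint.symm.trans hint', intervalIntegral.integral_interval_sub_left hint' hint⟩
  obtain ⟨hint₁, hsub₁⟩ := lam_sub hρ₁ hρ₁'
  obtain ⟨hint₂, hsub₂⟩ := lam_sub hρ₂ hρ₂'
  have hpos : 0 < ∫ r in ρ..ρ', (lamSlope H d₂ r - lamSlope H d₁ r) :=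
    intervalIntegral.intervalIntegral_pos_of_pos_on (hint₂.sub hint₁)
      (fun r hr => sub_pos.2 <|
        lamSlope_lt_lamSlope hH hd (lt_of_le_of_lt hρ₁ hr.1) (lt_of_le_of_lt hρ₂ hr.1)) hlt
  rw [intervalIntegral.integral_sub hint₂ hint₁, ← hsub₁, ← hsub₂] at hpos
  linarith

end Height

-- For `d < -2H` or `H ≤ 0` the height function need not map `[η_d, ∞)` bijectively onto `[0, ∞)`,
-- so `g₁` and `g₂` are only sections of `λ_{d₁}` and `λ_{d₂}` over some set `s` of heights.
theorem stmt_19_general {H d₁ d₂ : ℝ} (hH : |H| < 1 / 2) (hd : d₁ < d₂) {s : Set ℝ} {g₁ g₂ : ℝ → ℝ}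
    (hg₁ : ∀ t ∈ s, eta H d₁ ≤ g₁ t ∧ lam H d₁ (g₁ t) = t)
    (hg₂ : ∀ t ∈ s, eta H d₂ ≤ g₂ t ∧ lam H d₂ (g₂ t) = t) :
    {t ∈ s | g₂ t - g₁ t = 0}.Subsingleton := by
  have eq_zero {t : ℝ} (ht : t ∈ s) (h : g₂ t = g₁ t) :
      lam H d₂ (g₂ t) - lam H d₁ (g₂ t) = 0 := by
    rw [(hg₂ t ht).2, h, (hg₁ t ht).2, sub_self]
  have mem {t : ℝ} (ht : t ∈ s) (h : g₂ t = g₁ t) :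
      g₂ t ∈ Ici (eta H d₁) ∩ Ici (eta H d₂) :=
    ⟨h ▸ (hg₁ t ht).1, (hg₂ t ht).1⟩
  rintro t ⟨ht, h⟩ t' ⟨ht', h'⟩
  rw [sub_eq_zero] at h h'
  have hradius : g₂ t = g₂ t' := (strictMonoOn_lam_sub_lam hH hd).injOn (mem ht h) (mem ht' h')
    ((eq_zero ht h).trans (eq_zero ht' h').symm)
  rw [← (hg₂ t ht).2, hradius, (hg₂ t' ht').2]

/-- `g₁, g₂` encode the inverses `λ_{d₁}^{-1}, λ_{d₂}^{-1} : [0, ∞) → [η_d, ∞)`.  The function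
`t ↦ λ_{d₂}^{-1}(t) − λ_{d₁}^{-1}(t)` has at most one zero on `(0, ∞)`. -/
theorem stmt_19 (H d₁ d₂ : ℝ) (hH0 : 0 < H) (hH : H < 1 / 2)
    (hd₁ : 2 < d₁) (hd : d₁ < d₂) (g₁ g₂ : ℝ → ℝ)
    (hg₁ : ∀ t : ℝ, 0 ≤ t → eta H d₁ ≤ g₁ t ∧ lam H d₁ (g₁ t) = t)
    (hg₂ : ∀ t : ℝ, 0 ≤ t → eta H d₂ ≤ g₂ t ∧ lam H d₂ (g₂ t) = t) :
    ∀ t t' : ℝ, 0 < t → 0 < t' →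
      g₂ t - g₁ t = 0 → g₂ t' - g₁ t' = 0 → t = t' :=
  fun _ _ ht ht' h h' => stmt_19_general (s := Ici 0) ((abs_of_pos hH0).trans_lt hH) hd hg₁ hg₂
    ⟨ht.le, h⟩ ⟨ht'.le, h'⟩
end
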